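/- Let (g,B_g) be an irreducible finite-dimensional NIS-Lie superalgebra over a field K of characteristic 2 with B_g odd. If there exists a nonzero odd central element x ∈ z(g)_1 with B_g(x, s_g(v)) = 0 for all v ∈ g_1, then (g,B_g) is obtained either as a D_ev-extension or as a D_od-extension of a NIS-Lie superalgebra (a,B_a) of dimension dim(g) − 2 (with B_a odd). -/

import Mathlib

/-!
Common definitions: Lie superalgebras in characteristic 2 (encoded by their even
part `g0`, odd part `g1`, bracket components and squaring), NIS forms (even and odd),
homogeneous derivations, isometries, ideals, irreducibility, and the structure
formulas of the various double extensions.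
-/

namespace Char2DoubleExt

section Defs

variable (K : Type) [Field K]
variable (g0 g1 h0 h1 : Type)
variable [AddCommGroup g0] [Module K g0] [AddCommGroup g1] [Module K g1]
variable [AddCommGroup h0] [Module K h0] [AddCommGroup h1] [Module K h1]

/-- A Lie superalgebra over a field of characteristic 2: `g0` is the even part,
`g1` the odd part, `br0` the bracket on `g0`, `br1` the action of `g0` on `g1`
(the mixed bracket, extended symmetrically), `br11` the bracket of two odd
elements, and `sq` the squaring, whose polarization is `br11`. -/
structure SuperAlg : Type where
  br0 : g0 →ₗ[K] g0 →ₗ[K] g0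
  br1 : g0 →ₗ[K] g1 →ₗ[K] g1
  br11 : g1 →ₗ[K] g1 →ₗ[K] g0
  sq : g1 → g0
  sq_smul : ∀ (c : K) (f : g1), sq (c • f) = (c * c) • sq f
  sq_add : ∀ f g : g1, sq (f + g) = sq f + sq g + br11 f g
  br0_self : ∀ x : g0, br0 x x = 0
  br11_comm : ∀ f g : g1, br11 f g = br11 g f
  jacobi0 : ∀ x y z : g0, br0 x (br0 y z) + br0 y (br0 z x) + br0 z (br0 x y) = 0
  act_br : ∀ (x y : g0) (f : g1), br1 (br0 x y) f = br1 x (br1 y f) + br1 y (br1 x f)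
  jacobi_mix : ∀ (x : g0) (f g : g1),
    br0 x (br11 f g) + br11 f (br1 x g) + br11 g (br1 x f) = 0
  sq_br0 : ∀ (f : g1) (x : g0), br0 (sq f) x = br11 f (br1 x f)
  sq_br1 : ∀ f g : g1, br1 (sq f) g = br1 (br11 f g) f

/-- A non-degenerate invariant supersymmetric *even* bilinear form on a Lie
superalgebra in characteristic 2: it pairs `g0` with `g0` (component `B0`) and
`g1` with `g1` (component `B1`); mixed pairings vanish by evenness. -/
structure EvenNIS (S : SuperAlg K g0 g1) : Type where
  B0 : g0 →ₗ[K] g0 →ₗ[K] K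
  B1 : g1 →ₗ[K] g1 →ₗ[K] K
  symm0 : ∀ x y, B0 x y = B0 y x
  symm1 : ∀ f g, B1 f g = B1 g f
  alt1 : ∀ f, B1 f f = 0
  nondeg0 : ∀ x, (∀ y, B0 x y = 0) → x = 0
  nondeg1 : ∀ f, (∀ g, B1 f g = 0) → f = 0
  inv0 : ∀ x y z, B0 (S.br0 x y) z = B0 x (S.br0 y z)
  inv1 : ∀ (x : g0) (f g : g1), B1 (S.br1 x f) g = B0 x (S.br11 f g)
  inv2 : ∀ (f g : g1) (x : g0), B0 (S.br11 f g) x = B1 f (S.br1 x g)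

/-- A non-degenerate invariant supersymmetric *odd* bilinear form: it pairs `g0`
with `g1` (component `Bo`); like-parity pairings vanish by oddness, and
`B(f,f) = 0` for odd `f` is automatic. -/
structure OddNIS (S : SuperAlg K g0 g1) : Type where
  Bo : g0 →ₗ[K] g1 →ₗ[K] K
  nondeg0 : ∀ x, (∀ f, Bo x f = 0) → x = 0
  nondeg1 : ∀ f, (∀ x, Bo x f = 0) → f = 0
  inv0 : ∀ (x y : g0) (f : g1), Bo (S.br0 x y) f = Bo x (S.br1 y f)
  inv1 : ∀ (x y : g0) (f : g1), Bo y (S.br1 x f) = Bo x (S.br1 y f)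
  inv2 : ∀ f g h : g1, Bo (S.br11 f g) h = Bo (S.br11 g h) f

/-- An even derivation of a Lie superalgebra in characteristic 2. -/
structure EvenDer (S : SuperAlg K g0 g1) : Type where
  D0 : g0 →ₗ[K] g0
  D1 : g1 →ₗ[K] g1
  der0 : ∀ x y, D0 (S.br0 x y) = S.br0 (D0 x) y + S.br0 x (D0 y)
  der1 : ∀ x f, D1 (S.br1 x f) = S.br1 (D0 x) f + S.br1 x (D1 f)
  der_sq : ∀ f, D0 (S.sq f) = S.br11 (D1 f) f

/-- An odd derivation of a Lie superalgebra in characteristic 2. -/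
structure OddDer (S : SuperAlg K g0 g1) : Type where
  D0 : g0 →ₗ[K] g1
  D1 : g1 →ₗ[K] g0
  der0 : ∀ x y, D0 (S.br0 x y) = S.br1 x (D0 y) + S.br1 y (D0 x)
  der1 : ∀ x f, D1 (S.br1 x f) = S.br11 (D0 x) f + S.br0 x (D1 f)
  der_sq : ∀ f, D0 (S.sq f) = S.br1 (D1 f) f

/-- An isometry between Lie superalgebras endowed with even NIS forms: an even
linear bijection preserving brackets, squarings and the bilinear forms. -/
structure EvenIsometry (S : SuperAlg K g0 g1) (N : EvenNIS K g0 g1 S)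
    (S' : SuperAlg K h0 h1) (N' : EvenNIS K h0 h1 S') : Type where
  e0 : g0 ≃ₗ[K] h0
  e1 : g1 ≃ₗ[K] h1
  map_br0 : ∀ x y, e0 (S.br0 x y) = S'.br0 (e0 x) (e0 y)
  map_br1 : ∀ x f, e1 (S.br1 x f) = S'.br1 (e0 x) (e1 f)
  map_br11 : ∀ f g, e0 (S.br11 f g) = S'.br11 (e1 f) (e1 g)
  map_sq : ∀ f, e0 (S.sq f) = S'.sq (e1 f)
  map_B0 : ∀ x y, N'.B0 (e0 x) (e0 y) = N.B0 x y
  map_B1 : ∀ f g, N'.B1 (e1 f) (e1 g) = N.B1 f g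

/-- An isometry between Lie superalgebras endowed with odd NIS forms. -/
structure OddIsometry (S : SuperAlg K g0 g1) (N : OddNIS K g0 g1 S)
    (S' : SuperAlg K h0 h1) (N' : OddNIS K h0 h1 S') : Type where
  e0 : g0 ≃ₗ[K] h0
  e1 : g1 ≃ₗ[K] h1
  map_br0 : ∀ x y, e0 (S.br0 x y) = S'.br0 (e0 x) (e0 y)
  map_br1 : ∀ x f, e1 (S.br1 x f) = S'.br1 (e0 x) (e1 f)
  map_br11 : ∀ f g, e0 (S.br11 f g) = S'.br11 (e1 f) (e1 g)
  map_sq : ∀ f, e0 (S.sq f) = S'.sq (e1 f)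
  map_Bo : ∀ x f, N'.Bo (e0 x) (e1 f) = N.Bo x f

/-- A (graded) ideal of a Lie superalgebra in characteristic 2, given by its
even part `I0` and odd part `I1`. -/
def IsIdealPair (S : SuperAlg K g0 g1) (I0 : Submodule K g0) (I1 : Submodule K g1) : Prop :=
  (∀ x ∈ I0, ∀ y, S.br0 x y ∈ I0) ∧ (∀ x ∈ I0, ∀ f, S.br1 x f ∈ I1) ∧
  (∀ f ∈ I1, ∀ x : g0, S.br1 x f ∈ I1) ∧ (∀ f ∈ I1, ∀ g, S.br11 f g ∈ I0) ∧
  (∀ f ∈ I1, S.sq f ∈ I0)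

/-- Irreducibility of a NIS-Lie superalgebra with an even form: it is not the
direct sum of two nonzero mutually orthogonal ideals. -/
def EvenIrreducible (S : SuperAlg K g0 g1) (N : EvenNIS K g0 g1 S) : Prop :=
  ¬ ∃ (I0 J0 : Submodule K g0) (I1 J1 : Submodule K g1),
      IsIdealPair K g0 g1 S I0 I1 ∧ IsIdealPair K g0 g1 S J0 J1 ∧
      (I0 ≠ ⊥ ∨ I1 ≠ ⊥) ∧ (J0 ≠ ⊥ ∨ J1 ≠ ⊥) ∧
      I0 ⊓ J0 = ⊥ ∧ I0 ⊔ J0 = ⊤ ∧ I1 ⊓ J1 = ⊥ ∧ I1 ⊔ J1 = ⊤ ∧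
      (∀ x ∈ I0, ∀ y ∈ J0, N.B0 x y = 0) ∧ (∀ f ∈ I1, ∀ g ∈ J1, N.B1 f g = 0)

/-- Irreducibility of a NIS-Lie superalgebra with an odd form. -/
def OddIrreducible (S : SuperAlg K g0 g1) (N : OddNIS K g0 g1 S) : Prop :=
  ¬ ∃ (I0 J0 : Submodule K g0) (I1 J1 : Submodule K g1),
      IsIdealPair K g0 g1 S I0 I1 ∧ IsIdealPair K g0 g1 S J0 J1 ∧
      (I0 ≠ ⊥ ∨ I1 ≠ ⊥) ∧ (J0 ≠ ⊥ ∨ J1 ≠ ⊥) ∧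
      I0 ⊓ J0 = ⊥ ∧ I0 ⊔ J0 = ⊤ ∧ I1 ⊓ J1 = ⊥ ∧ I1 ⊔ J1 = ⊤ ∧
      (∀ x ∈ I0, ∀ g ∈ J1, N.Bo x g = 0) ∧ (∀ y ∈ J0, ∀ f ∈ I1, N.Bo y f = 0)

/-- An ideal of a Lie superalgebra given as a pair of subsets (closed under the
vector space operations, brackets with arbitrary elements, and the squaring). -/
def IsIdealSet (S : SuperAlg K g0 g1) (I0 : Set g0) (I1 : Set g1) : Prop :=
  ((0 : g0) ∈ I0) ∧ (∀ x y, x ∈ I0 → y ∈ I0 → x + y ∈ I0) ∧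
  (∀ (c : K) x, x ∈ I0 → c • x ∈ I0) ∧
  ((0 : g1) ∈ I1) ∧ (∀ f g, f ∈ I1 → g ∈ I1 → f + g ∈ I1) ∧
  (∀ (c : K) f, f ∈ I1 → c • f ∈ I1) ∧
  (∀ x ∈ I0, ∀ y, S.br0 x y ∈ I0) ∧ (∀ x ∈ I0, ∀ f, S.br1 x f ∈ I1) ∧
  (∀ f ∈ I1, ∀ x : g0, S.br1 x f ∈ I1) ∧ (∀ f ∈ I1, ∀ g, S.br11 f g ∈ I0) ∧
  (∀ f ∈ I1, S.sq f ∈ I0)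

/-- The even part of the center of a Lie superalgebra. -/
def zEven (S : SuperAlg K g0 g1) : Submodule K g0 :=
  (⨅ y : g0, LinearMap.ker (S.br0.flip y)) ⊓ (⨅ f : g1, LinearMap.ker (S.br1.flip f))

/-- The odd part of the center of a Lie superalgebra. -/
def zOdd (S : SuperAlg K g0 g1) : Submodule K g1 :=
  (⨅ x : g0, LinearMap.ker (S.br1 x)) ⊓ (⨅ g : g1, LinearMap.ker (S.br11.flip g))

/-- The compatibility conditions between an even NIS `N`, an even derivation `D`
and a quadratic form `al` on the odd part, entering the `D_ev`-extension (even
form case): `B(Du,v)+B(u,Dv)=0`, `B(Du,u)=0` for even `u`, `al` is quadratic and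
its polar form is `B(·,D·)`. -/
def DevDataEven (S : SuperAlg K g0 g1) (N : EvenNIS K g0 g1 S)
    (D : EvenDer K g0 g1 S) (al : g1 → K) : Prop :=
  (∀ x y : g0, N.B0 (D.D0 x) y + N.B0 x (D.D0 y) = 0) ∧
  (∀ f g : g1, N.B1 (D.D1 f) g + N.B1 f (D.D1 g) = 0) ∧
  (∀ x : g0, N.B0 (D.D0 x) x = 0) ∧
  (∀ (c : K) (f : g1), al (c • f) = c * c * al f) ∧
  (∀ f g : g1, N.B1 f (D.D1 g) = al (f + g) - al f - al g)

/-- The structure constants of the `D_ev`-extension `g = Kx ⊕ a ⊕ Kx*` (even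
form, even `x`, `x*`); an element of the even part is written `(r, u, s)` for
`r x + u + s x*`, and the constant `c` is the (arbitrary) value `B_g(x*,x*)`. -/
def DevExtEvenFormulas (S : SuperAlg K g0 g1) (N : EvenNIS K g0 g1 S)
    (D : EvenDer K g0 g1 S) (al : g1 → K) (c : K)
    (T : SuperAlg K (K × g0 × K) g1) (M : EvenNIS K (K × g0 × K) g1 T) : Prop :=
  (∀ (r s r' s' : K) (u u' : g0),
      T.br0 (r, u, s) (r', u', s')
        = (N.B0 (D.D0 u) u', S.br0 u u' + s • D.D0 u' + s' • D.D0 u, 0)) ∧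
  (∀ (r s : K) (u : g0) (f : g1), T.br1 (r, u, s) f = S.br1 u f + s • D.D1 f) ∧
  (∀ f : g1, T.sq f = (al f, S.sq f, 0)) ∧
  (∀ (r s r' s' : K) (u u' : g0),
      M.B0 (r, u, s) (r', u', s') = N.B0 u u' + r * s' + r' * s + c * (s * s')) ∧
  (∀ f g : g1, M.B1 f g = N.B1 f g)

/-- The compatibility conditions between an even NIS `N`, an odd derivation `D`
and an even element `w = a₀`, entering the `D_od`-extension (even form case):
`B(Du,v) = B(u,Dv)`, `D² = ad_w`, `D(w) = 0`. -/
def DodDataEven (S : SuperAlg K g0 g1) (N : EvenNIS K g0 g1 S)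
    (D : OddDer K g0 g1 S) (w : g0) : Prop :=
  (∀ (x : g0) (f : g1), N.B1 (D.D0 x) f = N.B0 x (D.D1 f)) ∧
  (∀ x : g0, D.D1 (D.D0 x) = S.br0 w x) ∧
  (∀ f : g1, D.D0 (D.D1 f) = S.br1 w f) ∧
  D.D0 w = 0

/-- The structure constants of the `D_od`-extension `g = Kx ⊕ a ⊕ Kx*` (even
form, odd `x`, `x*`); an element of the odd part is written `(r, u, t)` for
`r x + u + t x*`. -/
def DodExtEvenFormulas (S : SuperAlg K g0 g1) (N : EvenNIS K g0 g1 S)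
    (D : OddDer K g0 g1 S) (w : g0)
    (T : SuperAlg K g0 (K × g1 × K)) (M : EvenNIS K g0 (K × g1 × K) T) : Prop :=
  (∀ x y : g0, T.br0 x y = S.br0 x y) ∧
  (∀ (x : g0) (r t : K) (u : g1),
      T.br1 x (r, u, t) = (N.B1 (D.D0 x) u, S.br1 x u + t • D.D0 x, 0)) ∧
  (∀ (r t : K) (u : g1), T.sq (r, u, t) = S.sq u + (t * t) • w + t • D.D1 u) ∧
  (∀ x y : g0, M.B0 x y = N.B0 x y) ∧
  (∀ (r t r' t' : K) (u u' : g1),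
      M.B1 (r, u, t) (r', u', t') = N.B1 u u' + r * t' + r' * t)

/-- The compatibility conditions between an odd NIS `No`, an odd derivation `D`,
an even element `w = a₀` and a quadratic form `al`, entering the
`D_od`-extension (odd form case). -/
def DodDataOdd (S : SuperAlg K g0 g1) (No : OddNIS K g0 g1 S)
    (D : OddDer K g0 g1 S) (w : g0) (al : g1 → K) : Prop :=
  (∀ x y : g0, No.Bo y (D.D0 x) + No.Bo x (D.D0 y) = 0) ∧
  (∀ f g : g1, No.Bo (D.D1 f) g + No.Bo (D.D1 g) f = 0) ∧
  (∀ x : g0, No.Bo x (D.D0 x) = 0) ∧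
  (∀ x : g0, D.D1 (D.D0 x) = S.br0 w x) ∧
  (∀ f : g1, D.D0 (D.D1 f) = S.br1 w f) ∧
  D.D0 w = 0 ∧
  (∀ (c : K) (f : g1), al (c • f) = c * c * al f) ∧
  (∀ f g : g1, al (f + g) - al f - al g = No.Bo (D.D1 f) g)

/-- The structure constants of the `D_od`-extension `g = Kx ⊕ a ⊕ Ke` (odd form,
even `x`, odd `e`); an even element is written `(r, u)` for `r x + u`, an odd
element `(v, μ)` for `v + μ e`. -/
def DodExtOddFormulas (S : SuperAlg K g0 g1) (No : OddNIS K g0 g1 S)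
    (D : OddDer K g0 g1 S) (w : g0) (al : g1 → K) (m : K)
    (T : SuperAlg K (K × g0) (g1 × K)) (M : OddNIS K (K × g0) (g1 × K) T) : Prop :=
  (∀ (r r' : K) (x y : g0), T.br0 (r, x) (r', y) = (No.Bo y (D.D0 x), S.br0 x y)) ∧
  (∀ (r μ : K) (x : g0) (v : g1), T.br1 (r, x) (v, μ) = (S.br1 x v + μ • D.D0 x, 0)) ∧
  (∀ (μ : K) (v : g1),
      T.sq (v, μ) = (μ * μ * m + al v, S.sq v + (μ * μ) • w + μ • D.D1 v)) ∧
  (∀ (r μ : K) (x : g0) (v : g1), M.Bo (r, x) (v, μ) = No.Bo x v + r * μ)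

/-- The compatibility condition between an odd NIS `No` and an even derivation
`D`, entering the `D_ev`-extension (odd form case): `B(Du,v)+B(u,Dv)=0`. -/
def DevDataOdd (S : SuperAlg K g0 g1) (No : OddNIS K g0 g1 S)
    (D : EvenDer K g0 g1 S) : Prop :=
  ∀ (x : g0) (v : g1), No.Bo (D.D0 x) v + No.Bo x (D.D1 v) = 0

/-- The structure constants of the `D_ev`-extension `g = Kx ⊕ a ⊕ Ke` (odd form,
odd `x`, even `e`); an even element is written `(u, ν)` for `u + ν e`, an odd
element `(μ, v)` for `μ x + v`. -/
def DevExtOddFormulas (S : SuperAlg K g0 g1) (No : OddNIS K g0 g1 S)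
    (D : EvenDer K g0 g1 S)
    (T : SuperAlg K (g0 × K) (K × g1)) (M : OddNIS K (g0 × K) (K × g1) T) : Prop :=
  (∀ (ν ν' : K) (x y : g0),
      T.br0 (x, ν) (y, ν') = (S.br0 x y + ν • D.D0 y + ν' • D.D0 x, 0)) ∧
  (∀ (ν μ : K) (x : g0) (v : g1),
      T.br1 (x, ν) (μ, v) = (No.Bo (D.D0 x) v, S.br1 x v + ν • D.D1 v)) ∧
  (∀ (μ : K) (v : g1), T.sq (μ, v) = (S.sq v, 0)) ∧
  (∀ (ν μ : K) (x : g0) (v : g1), M.Bo (x, ν) (μ, v) = No.Bo x v + ν * μ)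

end Defs

end Char2DoubleExt

namespace Char2DoubleExt

section Reduction

variable {K : Type} [Field K]

section KerProj

variable {V : Type} [AddCommGroup V] [Module K V]

/-- The projection onto the kernel of a linear form `φ` along a vector `v` with `φ v = 1`. -/
def kerProj (φ : V →ₗ[K] K) (v : V) (h : φ v = 1) : V →ₗ[K] LinearMap.ker φ :=
  LinearMap.codRestrict (LinearMap.ker φ) (LinearMap.id - φ.smulRight v) (by simp [h])

lemma coe_kerProj (φ : V →ₗ[K] K) (v : V) (h : φ v = 1) (z : V) :
    (kerProj φ v h z : V) = z - φ z • v := rfl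

lemma span_inf_ker_eq_bot (φ : V →ₗ[K] K) (v : V) (h : φ v = 1) :
    Submodule.span K {v} ⊓ LinearMap.ker φ = ⊥ := by
  rw [eq_bot_iff]
  rintro z ⟨hz, hz'⟩
  obtain ⟨c, rfl⟩ := Submodule.mem_span_singleton.1 hz
  have hc : c = 0 := by simpa [h] using hz'
  simp [hc]

lemma span_sup_ker_eq_top (φ : V →ₗ[K] K) (v : V) (h : φ v = 1) :
    Submodule.span K {v} ⊔ LinearMap.ker φ = ⊤ := by
  rw [eq_top_iff]
  intro z _
  refine Submodule.mem_sup.2 ⟨φ z • v, Submodule.smul_mem _ _ (Submodule.mem_span_singleton_self v),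
    kerProj φ v h z, (kerProj φ v h z).2, ?_⟩
  rw [coe_kerProj]
  abel

lemma finrank_ker_add_one [FiniteDimensional K V] (φ : V →ₗ[K] K) (v : V) (h : φ v = 1) :
    Module.finrank K (LinearMap.ker φ) + 1 = Module.finrank K V :=
  Module.Dual.finrank_ker_add_one_of_ne_zero (by rintro rfl; simp at h)

lemma add_self_eq_zero_of_charTwo [CharP K 2] (z : V) : z + z = 0 := by
  rw [← two_smul K z, CharTwo.two_eq_zero, zero_smul]

lemma eq_of_add_eq_zero_of_charTwo [CharP K 2] {y z : V} (h : y + z = 0) : y = z := by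
  rw [eq_neg_of_add_eq_zero_left h,
    neg_eq_of_add_eq_zero_left (add_self_eq_zero_of_charTwo (K := K) z)]

end KerProj

variable {g0 g1 : Type} [AddCommGroup g0] [Module K g0] [AddCommGroup g1] [Module K g1]
variable {S : SuperAlg K g0 g1} (No : OddNIS K g0 g1 S)

lemma SuperAlg.br0_comm [CharP K 2] (S : SuperAlg K g0 g1) (x y : g0) :
    S.br0 x y = S.br0 y x := by
  have h := S.br0_self (x + y)
  simp only [map_add, LinearMap.add_apply, S.br0_self, zero_add, add_zero] at h
  exact (eq_of_add_eq_zero_of_charTwo (K := K) h).symm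

lemma SuperAlg.br11_self [CharP K 2] (S : SuperAlg K g0 g1) (f : g1) : S.br11 f f = 0 := by
  have h := S.sq_add f f
  have h2 := S.sq_smul (0 : K) 0
  rw [add_self_eq_zero_of_charTwo (K := K) f, add_self_eq_zero_of_charTwo (K := K) (S.sq f)] at h
  simpa [h] using h2

namespace OddNIS

/-- The even elements orthogonal to the odd element `b`. -/
abbrev evenPerp (b : g1) : Submodule K g0 := LinearMap.ker (No.Bo.flip b)

/-- The odd elements orthogonal to the even element `a`. -/
abbrev oddPerp (a : g0) : Submodule K g1 := LinearMap.ker (No.Bo a)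

variable {a : g0} {b : g1} (hab : No.Bo a b = 1)

/-- The projection of the even part along `a`, where `a`, `b` is a hyperbolic pair. -/
def evenProj : g0 →ₗ[K] No.evenPerp b := kerProj (No.Bo.flip b) a hab

/-- The projection of the odd part along `b`, where `a`, `b` is a hyperbolic pair. -/
def oddProj : g1 →ₗ[K] No.oddPerp a := kerProj (No.Bo a) b hab

lemma coe_evenProj (z : g0) : (No.evenProj hab z : g0) = z - No.Bo z b • a := rfl

lemma coe_oddProj (f : g1) : (No.oddProj hab f : g1) = f - No.Bo a f • b := rfl

variable {No}

lemma coe_evenProj_of_eq_zero {z : g0} (hz : No.Bo z b = 0) : (No.evenProj hab z : g0) = z := by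
  simp [coe_evenProj, hz]

lemma coe_oddProj_of_eq_zero {f : g1} (hf : No.Bo a f = 0) : (No.oddProj hab f : g1) = f := by
  simp [coe_oddProj, hf]

variable (No)

/-- Replacing a bracket or a square by its projection to the orthogonal complement of the
hyperbolic pair `a`, `b` does not change its brackets. -/
structure Reducible : Prop where
  br0_br0 : ∀ (y u v : g0), S.br0 y (No.evenProj hab (S.br0 u v)) = S.br0 y (S.br0 u v)
  br1_br0 : ∀ (u v : g0) (f : g1), S.br1 (No.evenProj hab (S.br0 u v)) f = S.br1 (S.br0 u v) f
  br0_sq : ∀ (f : g1) (y : g0), S.br0 (No.evenProj hab (S.sq f)) y = S.br0 (S.sq f) y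
  br1_sq : ∀ (f g : g1), S.br1 (No.evenProj hab (S.sq f)) g = S.br1 (S.sq f) g
  br0_br11 : ∀ (y : g0) (f g : g1),
    S.br0 y (No.evenProj hab (S.br11 f g)) = S.br0 y (S.br11 f g)
  br1_br11 : ∀ (f g h : g1), S.br1 (No.evenProj hab (S.br11 f g)) h = S.br1 (S.br11 f g) h
  br1_br1 : ∀ (y u : g0) (f : g1), S.br1 y (No.oddProj hab (S.br1 u f)) = S.br1 y (S.br1 u f)
  br11_br1 : ∀ (g : g1) (u : g0) (f : g1),
    S.br11 g (No.oddProj hab (S.br1 u f)) = S.br11 g (S.br1 u f)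

variable {No hab}

/-- The Lie superalgebra structure on the orthogonal complement of a hyperbolic pair. -/
def Reducible.alg (h : No.Reducible hab) : SuperAlg K (No.evenPerp b) (No.oddPerp a) where
  br0 := (S.br0.domRestrict₁₂ (No.evenPerp b) (No.evenPerp b)).compr₂ (No.evenProj hab)
  br1 := (S.br1.domRestrict₁₂ (No.evenPerp b) (No.oddPerp a)).compr₂ (No.oddProj hab)
  br11 := (S.br11.domRestrict₁₂ (No.oddPerp a) (No.oddPerp a)).compr₂ (No.evenProj hab)
  sq f := No.evenProj hab (S.sq f)
  sq_smul c f := by simp [S.sq_smul]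
  sq_add f g := by simp [LinearMap.domRestrict₁₂_apply, S.sq_add]
  br0_self x := by simp [LinearMap.domRestrict₁₂_apply, S.br0_self]
  br11_comm f g := by simp [LinearMap.domRestrict₁₂_apply, S.br11_comm f g]
  jacobi0 x y z := by
    simp [LinearMap.domRestrict₁₂_apply, h.br0_br0, ← map_add, S.jacobi0]
  act_br x y f := by
    simp [LinearMap.domRestrict₁₂_apply, h.br1_br0, h.br1_br1, ← map_add, S.act_br]
  jacobi_mix x f g := by
    simp [LinearMap.domRestrict₁₂_apply, h.br0_br11, h.br11_br1, ← map_add, S.jacobi_mix]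
  sq_br0 f x := by
    simp [LinearMap.domRestrict₁₂_apply, h.br0_sq, h.br11_br1, S.sq_br0]
  sq_br1 f g := by
    simp [LinearMap.domRestrict₁₂_apply, h.br1_sq, h.br1_br11, S.sq_br1]

lemma Reducible.alg_br0 (h : No.Reducible hab) (u v : No.evenPerp b) :
    h.alg.br0 u v = No.evenProj hab (S.br0 u v) := rfl

lemma Reducible.alg_br1 (h : No.Reducible hab) (u : No.evenPerp b) (f : No.oddPerp a) :
    h.alg.br1 u f = No.oddProj hab (S.br1 u f) := rfl

lemma Reducible.alg_br11 (h : No.Reducible hab) (f g : No.oddPerp a) :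
    h.alg.br11 f g = No.evenProj hab (S.br11 f g) := rfl

lemma Reducible.alg_sq (h : No.Reducible hab) (f : No.oddPerp a) :
    h.alg.sq f = No.evenProj hab (S.sq f) := rfl

lemma Bo_evenProj (z : g0) (f : No.oddPerp a) :
    No.Bo (No.evenProj hab z) f = No.Bo z f := by
  have hf : No.Bo a f = 0 := f.2
  simp [coe_evenProj, hf]

lemma Bo_oddProj (u : No.evenPerp b) (f : g1) :
    No.Bo u (No.oddProj hab f) = No.Bo u f := by
  have hu : No.Bo u b = 0 := u.2
  simp [coe_oddProj, hu]

/-- The restriction of the odd form to the orthogonal complement of a hyperbolic pair. -/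
def Reducible.form (h : No.Reducible hab) :
    OddNIS K (No.evenPerp b) (No.oddPerp a) h.alg where
  Bo := No.Bo.domRestrict₁₂ (No.evenPerp b) (No.oddPerp a)
  nondeg0 x hx := Subtype.ext <| No.nondeg0 x fun f => by
    simpa [LinearMap.domRestrict₁₂_apply, Bo_oddProj] using hx (No.oddProj hab f)
  nondeg1 f hf := Subtype.ext <| No.nondeg1 f fun x => by
    simpa [LinearMap.domRestrict₁₂_apply, Bo_evenProj] using hf (No.evenProj hab x)
  inv0 x y f := by
    simp [LinearMap.domRestrict₁₂_apply, alg_br0, alg_br1, Bo_evenProj, Bo_oddProj, No.inv0]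
  inv1 x y f := by
    simp [LinearMap.domRestrict₁₂_apply, alg_br1, Bo_oddProj, No.inv1 (x : g0) y f]
  inv2 f g h' := by
    simp [LinearMap.domRestrict₁₂_apply, alg_br11, Bo_evenProj, No.inv2 (f : g1) g h']

lemma Reducible.form_Bo (h : No.Reducible hab) (u : No.evenPerp b) (f : No.oddPerp a) :
    h.form.Bo u f = No.Bo u f := rfl

/-- An odd central element orthogonal to all squares yields a reduction. -/
lemma reducible_of_odd_central (hb1 : ∀ y : g0, S.br1 y b = 0) (hb11 : ∀ f : g1, S.br11 b f = 0)
    (hsq : ∀ v : g1, No.Bo (S.sq v) b = 0) : No.Reducible hab := by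
  have h0 (u v : g0) : (No.evenProj hab (S.br0 u v) : g0) = S.br0 u v :=
    coe_evenProj_of_eq_zero _ (by simp [No.inv0, hb1])
  have h11 (f g : g1) : (No.evenProj hab (S.br11 f g) : g0) = S.br11 f g :=
    coe_evenProj_of_eq_zero _ (by simp [No.inv2 f g b, No.inv2 g b f, hb11])
  have hs (f : g1) : (No.evenProj hab (S.sq f) : g0) = S.sq f :=
    coe_evenProj_of_eq_zero _ (by simp [hsq])
  constructor <;> intros <;> simp [h0, h11, hs, coe_oddProj, hb1, S.br11_comm _ b, hb11]

/-- An even central element yields a reduction. -/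
lemma reducible_of_even_central [CharP K 2] (ha0 : ∀ y : g0, S.br0 a y = 0)
    (ha1 : ∀ f : g1, S.br1 a f = 0) : No.Reducible hab := by
  have h1 (u : g0) (f : g1) : (No.oddProj hab (S.br1 u f) : g1) = S.br1 u f :=
    coe_oddProj_of_eq_zero _ (by simp [← No.inv0, ha0])
  constructor <;> intros <;>
    simp [h1, coe_evenProj, S.br0_comm _ a, ha0, ha1]

/-- The even derivation `[a, ·]` induced on the reduction. -/
def Reducible.evenDer [CharP K 2] (h : No.Reducible hab) :
    EvenDer K (No.evenPerp b) (No.oddPerp a) h.alg where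
  D0 := (No.evenProj hab).comp ((S.br0 a).domRestrict _)
  D1 := (No.oddProj hab).comp ((S.br1 a).domRestrict _)
  der0 x y := by
    simp only [alg_br0, LinearMap.comp_apply, LinearMap.domRestrict_apply, h.br0_br0, ← map_add,
      S.br0_comm (No.evenProj hab (S.br0 a (x : g0)) : g0)]
    have hj := S.jacobi0 a x y
    rw [add_assoc] at hj
    rw [eq_of_add_eq_zero_of_charTwo (K := K) hj, S.br0_comm (y : g0) a, add_comm]
  der1 x f := by
    simp only [alg_br1, LinearMap.comp_apply, LinearMap.domRestrict_apply, h.br1_br1, h.br1_br0,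
      ← map_add]
    rw [S.act_br, add_assoc, add_self_eq_zero_of_charTwo (K := K), add_zero]
  der_sq f := by
    simp only [alg_sq, alg_br11, LinearMap.comp_apply, LinearMap.domRestrict_apply,
      S.br11_comm _ (f : g1), h.br11_br1]
    rw [S.br0_comm, h.br0_sq, S.sq_br0]

/-- The odd derivation `[b, ·]` induced on the reduction. -/
def Reducible.oddDer [CharP K 2] (h : No.Reducible hab) :
    OddDer K (No.evenPerp b) (No.oddPerp a) h.alg where
  D0 := (No.oddProj hab).comp ((S.br1.flip b).domRestrict _)
  D1 := (No.evenProj hab).comp ((S.br11 b).domRestrict _)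
  der0 x y := by
    simp only [alg_br0, alg_br1, LinearMap.comp_apply, LinearMap.domRestrict_apply,
      LinearMap.flip_apply, h.br1_br0, h.br1_br1, ← map_add, S.act_br]
  der1 x f := by
    simp only [alg_br0, alg_br1, alg_br11, LinearMap.comp_apply, LinearMap.domRestrict_apply,
      LinearMap.flip_apply, S.br11_comm (No.oddProj hab _ : g1), h.br11_br1, h.br0_br11,
      ← map_add]
    have hj := S.jacobi_mix x b f
    rw [add_comm (S.br0 _ _), add_assoc] at hj
    rw [eq_of_add_eq_zero_of_charTwo (K := K) hj, add_comm]
  der_sq f := by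
    simp only [alg_sq, alg_br1, LinearMap.comp_apply, LinearMap.domRestrict_apply,
      LinearMap.flip_apply, h.br1_sq, h.br1_br11]
    rw [S.sq_br1, S.br11_comm]

end OddNIS

end Reduction

/-- Proposition 4.5 of the paper: an irreducible
finite-dimensional NIS-Lie superalgebra `(g, B_g)` in characteristic 2 with
`B_g` odd, admitting a nonzero odd central element `x` with `B_g(x, s_g(v)) = 0`
for all odd `v`, is obtained either as a `D_ev`-extension (odd `x`, even `e`) or
as a `D_od`-extension (even `x`, odd `e`) of a NIS-Lie superalgebra with odd
form of dimension `dim g − 2`. -/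
theorem stmt13 (K : Type) [Field K] [CharP K 2] (g0 g1 : Type)
    [AddCommGroup g0] [Module K g0] [AddCommGroup g1] [Module K g1]
    [FiniteDimensional K g0] [FiniteDimensional K g1]
    (S : SuperAlg K g0 g1) (No : OddNIS K g0 g1 S)
    (hirr : OddIrreducible K g0 g1 S No)
    (hz : ∃ x : g1, x ≠ 0 ∧ (∀ y : g0, S.br1 y x = 0) ∧ (∀ f : g1, S.br11 x f = 0) ∧
            (∀ v : g1, No.Bo (S.sq v) x = 0)) :
    -- `g` is a `D_ev`-extension (odd `x`, even `e`) ...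
    (∃ (x : g1) (e : g0) (A0 : Submodule K g0) (A1 : Submodule K g1)
      (T : SuperAlg K ↥A0 ↥A1) (M : OddNIS K ↥A0 ↥A1 T)
      (D : EvenDer K ↥A0 ↥A1 T),
      DevDataOdd K ↥A0 ↥A1 T M D ∧
      x ≠ 0 ∧ e ≠ 0 ∧
      Submodule.span K ({e} : Set g0) ⊓ A0 = ⊥ ∧
      Submodule.span K ({e} : Set g0) ⊔ A0 = ⊤ ∧
      Submodule.span K ({x} : Set g1) ⊓ A1 = ⊥ ∧
      Submodule.span K ({x} : Set g1) ⊔ A1 = ⊤ ∧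
      Module.finrank K ↥A0 + 1 = Module.finrank K g0 ∧
      Module.finrank K ↥A1 + 1 = Module.finrank K g1 ∧
      (∀ y : g0, S.br1 y x = 0) ∧ (∀ f : g1, S.br11 x f = 0) ∧ S.sq x = 0 ∧
      (∀ u v : A0, S.br0 ↑u ↑v = T.br0 u v) ∧
      (∀ u : A0, S.br0 ↑u e = ↑(D.D0 u)) ∧
      (∀ (u : A0) (f : A1), S.br1 ↑u ↑f = M.Bo (D.D0 u) f • x + ↑(T.br1 u f)) ∧
      (∀ f : A1, S.br1 e ↑f = ↑(D.D1 f)) ∧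
      (∀ f g : A1, S.br11 ↑f ↑g = T.br11 f g) ∧
      (∀ f : A1, S.sq ↑f = T.sq f) ∧
      (∀ (u : A0) (f : A1), No.Bo ↑u ↑f = M.Bo u f) ∧
      No.Bo e x = 1 ∧ (∀ f : A1, No.Bo e ↑f = 0) ∧ (∀ u : A0, No.Bo ↑u x = 0))
    ∨
    -- ... or a `D_od`-extension (even `x`, odd `e`)
    (∃ (x : g0) (e : g1) (A0 : Submodule K g0) (A1 : Submodule K g1)
      (T : SuperAlg K ↥A0 ↥A1) (M : OddNIS K ↥A0 ↥A1 T)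
      (D : OddDer K ↥A0 ↥A1 T) (w : A0) (al : ↥A1 → K) (m : K),
      DodDataOdd K ↥A0 ↥A1 T M D w al ∧
      x ≠ 0 ∧ e ≠ 0 ∧
      Submodule.span K ({x} : Set g0) ⊓ A0 = ⊥ ∧
      Submodule.span K ({x} : Set g0) ⊔ A0 = ⊤ ∧
      Submodule.span K ({e} : Set g1) ⊓ A1 = ⊥ ∧
      Submodule.span K ({e} : Set g1) ⊔ A1 = ⊤ ∧
      Module.finrank K ↥A0 + 1 = Module.finrank K g0 ∧
      Module.finrank K ↥A1 + 1 = Module.finrank K g1 ∧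
      (∀ y : g0, S.br0 x y = 0) ∧ (∀ f : g1, S.br1 x f = 0) ∧
      (∀ u v : A0, S.br0 ↑u ↑v = M.Bo v (D.D0 u) • x + ↑(T.br0 u v)) ∧
      (∀ (u : A0) (f : A1), S.br1 ↑u ↑f = ↑(T.br1 u f)) ∧
      (∀ u : A0, S.br1 ↑u e = ↑(D.D0 u)) ∧
      (∀ f g : A1, S.br11 ↑f ↑g = M.Bo (D.D1 f) g • x + ↑(T.br11 f g)) ∧
      (∀ f : A1, S.br11 e ↑f = ↑(D.D1 f)) ∧
      (∀ f : A1, S.sq ↑f = al f • x + ↑(T.sq f)) ∧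
      S.sq e = m • x + ↑w ∧
      (∀ (u : A0) (f : A1), No.Bo ↑u ↑f = M.Bo u f) ∧
      No.Bo x e = 1 ∧ (∀ f : A1, No.Bo x ↑f = 0) ∧ (∀ u : A0, No.Bo ↑u e = 0)) := by
  obtain ⟨x, hx, hx1, hx11, hxsq⟩ := hz
  by_cases hs : S.sq x = 0
  · left
    obtain ⟨e', he'⟩ : ∃ y, No.Bo y x ≠ 0 := by
      by_contra! h
      exact hx (No.nondeg1 x h)
    obtain ⟨e, he⟩ : ∃ e, No.Bo e x = 1 := ⟨(No.Bo e' x)⁻¹ • e', by simp [he']⟩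
    have h : No.Reducible he := OddNIS.reducible_of_odd_central hx1 hx11 hxsq
    have hD0 (u : No.evenPerp x) : (h.evenDer.D0 u : g0) = S.br0 e u :=
      OddNIS.coe_evenProj_of_eq_zero he (by simp [No.inv0, hx1])
    have hD1 (f : No.oddPerp e) : (h.evenDer.D1 f : g1) = S.br1 e f :=
      OddNIS.coe_oddProj_of_eq_zero he (by simp [← No.inv0, S.br0_self])
    refine ⟨x, e, No.evenPerp x, No.oddPerp e, h.alg, h.form, h.evenDer, ?_, hx, ?_,
      span_inf_ker_eq_bot _ _ he, span_sup_ker_eq_top _ _ he, span_inf_ker_eq_bot _ _ he,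
      span_sup_ker_eq_top _ _ he, finrank_ker_add_one _ _ he, finrank_ker_add_one _ _ he,
      hx1, hx11, hs, fun u v => ?_, fun u => ?_, fun u f => ?_, fun f => (hD1 f).symm,
      fun f g => ?_, fun f => ?_, fun u f => rfl, he, fun f => f.2, fun u => u.2⟩
    · intro u f
      rw [h.form_Bo, h.form_Bo, hD0, hD1, S.br0_comm, No.inv0]
      exact add_self_eq_zero_of_charTwo (K := K) _
    · rintro rfl
      simp at he
    · exact (OddNIS.coe_evenProj_of_eq_zero he (by simp [No.inv0, hx1])).symm
    · rw [hD0, S.br0_comm]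
    · rw [h.form_Bo, hD0, h.alg_br1, OddNIS.coe_oddProj, No.inv0]
      abel
    · exact (OddNIS.coe_evenProj_of_eq_zero he
        (by simp [No.inv2 (f : g1) g x, No.inv2 (g : g1) x f, hx11])).symm
    · exact (OddNIS.coe_evenProj_of_eq_zero he (hxsq f)).symm
  · right
    have hc0 (y : g0) : S.br0 (S.sq x) y = 0 := by rw [S.sq_br0, hx11]
    have hc1 (f : g1) : S.br1 (S.sq x) f = 0 := by rw [S.sq_br1, hx1]
    generalize S.sq x = c at hs hc0 hc1
    obtain ⟨e', he'⟩ : ∃ f, No.Bo c f ≠ 0 := by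
      by_contra! h
      exact hs (No.nondeg0 c h)
    obtain ⟨e, he⟩ : ∃ e, No.Bo c e = 1 := ⟨(No.Bo c e')⁻¹ • e', by simp [he']⟩
    have h : No.Reducible he := OddNIS.reducible_of_even_central hc0 hc1
    have hD0 (u : No.evenPerp e) : (h.oddDer.D0 u : g1) = S.br1 u e :=
      OddNIS.coe_oddProj_of_eq_zero he (by simp [← No.inv0, hc0])
    have hD1 (f : No.oddPerp c) : (h.oddDer.D1 f : g0) = S.br11 e f :=
      OddNIS.coe_evenProj_of_eq_zero he
        (by simp [No.inv2 e (f : g1) e, No.inv2 (f : g1) e e, S.br11_self])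
    have hbr1 (u : No.evenPerp e) (f : No.oddPerp c) :
        (h.alg.br1 u f : g1) = S.br1 u f :=
      OddNIS.coe_oddProj_of_eq_zero he
        (by simp [LinearMap.domRestrict₁₂_apply, ← No.inv0, hc0])
    refine ⟨c, e, No.evenPerp e, No.oddPerp c, h.alg, h.form, h.oddDer,
      No.evenProj he (S.sq e), fun f => No.Bo (S.sq f) e, No.Bo (S.sq e) e,
      ⟨fun u v => ?_, fun f g => ?_, fun u => ?_, fun u => ?_, fun f => ?_, ?_, fun r f => ?_,
        fun f g => ?_⟩, hs, ?_,
      span_inf_ker_eq_bot _ _ he, span_sup_ker_eq_top _ _ he, span_inf_ker_eq_bot _ _ he,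
      span_sup_ker_eq_top _ _ he, finrank_ker_add_one _ _ he, finrank_ker_add_one _ _ he,
      hc0, hc1, fun u v => ?_, fun u f => (hbr1 u f).symm, fun u => (hD0 u).symm,
      fun f g => ?_, fun f => (hD1 f).symm, fun f => ?_, ?_, fun u f => rfl, he,
      fun f => f.2, fun u => u.2⟩
    · rw [h.form_Bo, h.form_Bo, hD0, hD0, No.inv1]
      exact add_self_eq_zero_of_charTwo (K := K) _
    · rw [h.form_Bo, h.form_Bo, hD1, hD1, No.inv2 e (f : g1) g, S.br11_comm, ← No.inv2 e (g : g1) f]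
      exact add_self_eq_zero_of_charTwo (K := K) _
    · rw [h.form_Bo, hD0, ← No.inv0, S.br0_self]
      simp
    · refine Subtype.ext ?_
      have hu : No.Bo (S.br0 (S.sq e) u) e = 0 := by
        rw [S.sq_br0, No.inv2, No.inv2, S.br11_self]
        simp
      rw [hD1, hD0, h.alg_br0, h.br0_sq, OddNIS.coe_evenProj_of_eq_zero he hu, S.sq_br0]
    · refine Subtype.ext ?_
      rw [hD0, hD1, hbr1, h.br1_sq, S.sq_br1]
    · refine Subtype.ext ?_
      rw [hD0, h.br1_sq, S.sq_br1, S.br11_self]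
      simp
    · simp [S.sq_smul]
    · rw [h.form_Bo, hD1, No.inv2]
      simp only [S.sq_add, Submodule.coe_add, map_add, LinearMap.add_apply]
      ring
    · rintro rfl
      simp at he
    · rw [h.form_Bo, hD0, h.alg_br0, OddNIS.coe_evenProj, No.inv1, ← No.inv0]
      simp
    · rw [h.form_Bo, hD1, h.alg_br11, OddNIS.coe_evenProj, No.inv2]
      simp
    · rw [h.alg_sq, OddNIS.coe_evenProj]
      simp
    · rw [OddNIS.coe_evenProj]
      simp

end Char2DoubleExt
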